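/- There exists an absolute constant C > 0 such that for every even integer m ≥ 4 and every real M with 3 ≤ M ≤ m, one has ∑_{j} 1/j ≤ C·C(m)/log M, where the sum runs over integers j with M ≤ j ≤ m such that both j and m − j are prime. -/

import Mathlib

open Real

open scoped Classical

/-- The singular series `C(n) = ∏_{p ∤ n} (1 - 1/(p-1)²) · ∏_{p ∣ n} (1 + 1/(p-1))`,
where both products run over primes. -/
noncomputable def singularSeries (n : ℕ) : ℝ :=
  (∏' p : {p : ℕ // p.Prime ∧ ¬ p ∣ n}, (1 - 1 / ((p : ℕ) - 1 : ℝ) ^ 2)) *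
    ∏ p ∈ n.primeFactors, (1 + 1 / ((p : ℝ) - 1))

/-!
Sieving the polynomial `x (m - x)` by all primes up to `Q²`, with Selberg's weights, bounds the
number of `x` in an interval of length `J` with `x` and `m - x` prime by `J / S + O(Q¹²)`.
Expanding the densities as geometric series turns `S` into a sum over all integers `n ≤ Q²`, and
sorting the products `a b` with `a, b ≤ Q` and `b` coprime to `m` by their value `n` gives
`S ≥ (φ(m) / m) (∑_{a ≤ Q} 1/a)² ≥ (φ(m) / m) log² Q`. Taking `Q` to be the 14th root of `J`, the
count is `≪ (m / φ(m)) J / log² J`, so a dyadic block `[2ᵏ, 2ᵏ⁺¹)` contributes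
`≪ (m / φ(m)) / (k + 1)²` to the sum of reciprocals, and the blocks above `M` contribute
`≪ (m / φ(m)) / log M`.

For even `m` the factors with `p ∣ m` of the singular series multiply to `m / φ(m)`, while the
others run over odd `p` only and so multiply to at least `∏_{k ≥ 2} (1 - 1/k²) = 1/2`.
-/

section ResidueClasses

open Finset

theorem abs_card_Ico_modEq_sub_div_le_one (a J v : ℕ) {d : ℕ} (hd : 0 < d) :
    |(#{x ∈ Ico a (a + J) | x ≡ v [MOD d]} : ℝ) - J / d| ≤ 1 := by
  set y : ℚ := (a - v) / d
  have card_eq : (#{x ∈ Ico a (a + J) | x ≡ v [MOD d]} : ℚ) = ⌈y + J / d⌉ - ⌈y⌉ := by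
    have endpoint : (((a + J : ℕ) : ℚ) - v) / d = y + J / d := by
      simp only [y]
      push_cast
      ring
    have card_int := Nat.Ico_filter_modEq_card a (a + J) hd v
    rw [endpoint, max_eq_left
      (sub_nonneg.2 (Int.ceil_le_ceil (le_add_of_nonneg_right (by positivity))))] at card_int
    exact_mod_cast card_int
  have card_sub_le : |(#{x ∈ Ico a (a + J) | x ≡ v [MOD d]} : ℚ) - J / d| ≤ 1 := by
    rw [card_eq, abs_le]
    constructor <;> linarith [Int.le_ceil y, Int.ceil_lt_add_one y, Int.le_ceil (y + J / d),
      Int.ceil_lt_add_one (y + J / d)]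
  have cast_card_sub_le := (Rat.cast_le (K := ℝ)).2 card_sub_le
  push_cast at cast_card_sub_le
  exact cast_card_sub_le

theorem abs_card_Ico_natCast_mem_sub_le (a J : ℕ) {d : ℕ} [NeZero d] (T : Finset (ZMod d)) :
    |(#{x ∈ Ico a (a + J) | ((x : ℕ) : ZMod d) ∈ T} : ℝ) - #T / d * J| ≤ #T := by
  have card_fiber (v : ZMod d) (hv : v ∈ T) :
      #{x ∈ {x ∈ Ico a (a + J) | ((x : ℕ) : ZMod d) ∈ T} | ((x : ℕ) : ZMod d) = v} =
        #{x ∈ Ico a (a + J) | x ≡ v.val [MOD d]} := by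
    congr 1
    ext x
    simp only [mem_filter, ← ZMod.natCast_eq_natCast_iff, ZMod.natCast_zmod_val]
    grind
  have card_eq := card_eq_sum_card_fiberwise (s := {x ∈ Ico a (a + J) | ((x : ℕ) : ZMod d) ∈ T})
    (f := fun x : ℕ => (x : ZMod d)) (t := T) fun x hx => (mem_filter.1 hx).2
  rw [sum_congr rfl card_fiber] at card_eq
  calc |(#{x ∈ Ico a (a + J) | ((x : ℕ) : ZMod d) ∈ T} : ℝ) - #T / d * J|
      = |∑ v ∈ T, ((#{x ∈ Ico a (a + J) | x ≡ v.val [MOD d]} : ℝ) - J / d)| := by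
        rw [card_eq, Nat.cast_sum, sum_sub_distrib, sum_const, nsmul_eq_mul, mul_div_assoc',
          div_mul_eq_mul_div]
    _ ≤ ∑ v ∈ T, |(#{x ∈ Ico a (a + J) | x ≡ v.val [MOD d]} : ℝ) - J / d| :=
        abs_sum_le_sum_abs _ _
    _ ≤ ∑ _v ∈ T, 1 :=
        sum_le_sum fun v _ => abs_card_Ico_modEq_sub_div_le_one a J v.val (NeZero.pos d)
    _ = #T := by simp

end ResidueClasses

section RootDensity

open Finset Polynomial

/-- The number of roots modulo `d` of an integer polynomial, `ZMod 0` being `ℤ`. -/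
noncomputable def rootCount (f : ℤ[X]) (d : ℕ) : ℕ :=
  Nat.card {x : ZMod d // aeval x f = 0}

variable (f : ℤ[X])

theorem rootCount_eq_card_filter (d : ℕ) [NeZero d] :
    rootCount f d = #{x : ZMod d | aeval x f = 0} := by
  rw [rootCount, Nat.card_eq_fintype_card, Fintype.card_subtype]

theorem rootCount_le {d : ℕ} (hd : d ≠ 0) : rootCount f d ≤ d := by
  have : NeZero d := ⟨hd⟩
  exact (Finite.card_subtype_le _).trans (Nat.card_zmod d).le

theorem rootCount_one : rootCount f 1 = 1 := by
  rw [rootCount_eq_card_filter, filter_true_of_mem fun x _ => Subsingleton.elim _ _, card_univ,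
    ZMod.card]

theorem rootCount_mul {a b : ℕ} (hab : a.Coprime b) :
    rootCount f (a * b) = rootCount f a * rootCount f b := by
  rw [rootCount, rootCount, rootCount, ← Nat.card_prod]
  let e := ZMod.chineseRemainder hab
  have root_iff (x : ZMod (a * b)) :
      aeval x f = 0 ↔ aeval (e x).1 f = 0 ∧ aeval (e x).2 f = 0 := by
    rw [← Prod.mk_eq_zero, ← aeval_prod_apply, ← map_eq_zero_iff e e.injective]
    exact (congrArg (· = 0) (aeval_algHom_apply e.toRingHom.toIntAlgHom x f).symm).to_iff
  exact Nat.card_congr ((e.toEquiv.subtypeEquiv root_iff).trans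
    (Equiv.subtypeProdEquivProd (p := fun x : ZMod a => aeval x f = 0)
      (q := fun x : ZMod b => aeval x f = 0)))

/-- The density `d ↦ rootCount f d / d` of the integers `x` with `d ∣ f x`. -/
noncomputable def rootDensity : ArithmeticFunction ℝ where
  toFun d := rootCount f d / d
  map_zero' := by simp

theorem rootDensity_apply (d : ℕ) : rootDensity f d = rootCount f d / d := rfl

theorem rootDensity_isMultiplicative : (rootDensity f).IsMultiplicative := by
  refine ⟨by simp [rootDensity_apply, rootCount_one], fun {a b} hab => ?_⟩
  rw [rootDensity_apply, rootDensity_apply, rootDensity_apply, rootCount_mul f hab, Nat.cast_mul,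
    Nat.cast_mul, div_mul_div_comm]

theorem aeval_natCast_zmod_eq_zero_iff (d x : ℕ) :
    aeval ((x : ℕ) : ZMod d) f = 0 ↔ d ∣ (f.eval (x : ℤ)).natAbs := by
  rw [← Int.natCast_dvd, ← ZMod.intCast_zmod_eq_zero_iff_dvd, ← Int.cast_natCast (R := ZMod d),
    ← eq_intCast (algebraMap ℤ (ZMod d)), ← eq_intCast (algebraMap ℤ (ZMod d)),
    aeval_algebraMap_apply, coe_aeval_eq_eval]

theorem abs_card_Ico_dvd_eval_sub_le (a J : ℕ) {d : ℕ} (hd : d ≠ 0) :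
    |(#{x ∈ Ico a (a + J) | d ∣ (f.eval ((x : ℕ) : ℤ)).natAbs} : ℝ) - rootDensity f d * J| ≤
      rootCount f d := by
  have : NeZero d := ⟨hd⟩
  simpa only [rootDensity_apply, rootCount_eq_card_filter, mem_filter, mem_univ, true_and,
    aeval_natCast_zmod_eq_zero_iff] using
      abs_card_Ico_natCast_mem_sub_le a J {x : ZMod d | aeval x f = 0}

end RootDensity

section SelbergSieve

open ArithmeticFunction BoundingSieve Finset

theorem sum_moebius_divisors_filter_dvd {e : ℕ} (he : Squarefree e) (l : ℕ) :
    ∑ d ∈ e.divisors with l ∣ d, (moebius d : ℝ) = if l = e then (moebius l : ℝ) else 0 := by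
  by_cases hle : l ∣ e
  · obtain ⟨k, rfl⟩ := hle
    have hl : 0 < l := Nat.pos_of_ne_zero (left_ne_zero_of_mul he.ne_zero)
    have sum_moebius : ∑ c ∈ k.divisors, (moebius c : ℝ) = if k = 1 then 1 else 0 := by
      rw [← one_apply, ← coe_moebius_mul_coe_zeta (R := ℝ), coe_mul_zeta_apply]
      simp only [intCoe_apply]
    calc ∑ d ∈ (l * k).divisors with l ∣ d, (moebius d : ℝ)
        = ∑ c ∈ k.divisors, (moebius (l * c) : ℝ) := by
          refine (sum_nbij' (l * ·) (· / l) (fun c hc => ?_) (fun d hd => ?_) (fun c _ => ?_)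
            (fun d hd => ?_) fun _ _ => rfl).symm
          · exact mem_filter.2 ⟨Nat.mem_divisors.2 ⟨Nat.mul_dvd_mul_left l
              (Nat.dvd_of_mem_divisors hc), he.ne_zero⟩, dvd_mul_right l c⟩
          · exact Nat.mem_divisors.2 ⟨(Nat.div_dvd_iff_dvd_mul (mem_filter.1 hd).2 hl).2
              (Nat.dvd_of_mem_divisors (mem_filter.1 hd).1), right_ne_zero_of_mul he.ne_zero⟩
          · exact Nat.mul_div_cancel_left c hl
          · exact Nat.mul_div_cancel' (mem_filter.1 hd).2
      _ = moebius l * ∑ c ∈ k.divisors, (moebius c : ℝ) := by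
          rw [mul_sum]
          refine sum_congr rfl fun c hc => ?_
          rw [isMultiplicative_moebius.map_mul_of_coprime ((Nat.coprime_of_squarefree_mul
            he).coprime_dvd_right (Nat.dvd_of_mem_divisors hc)), Int.cast_mul]
      _ = if l = l * k then (moebius l : ℝ) else 0 := by
          rw [sum_moebius, mul_ite, mul_one, mul_zero]
          simp only [left_eq_mul₀ hl.ne']
  · rw [if_neg fun h => hle h.dvd, filter_false_of_mem fun d hd hld =>
      hle (hld.trans (Nat.dvd_of_mem_divisors hd)), sum_empty]

/-- The truncated sum of `selbergTerms` whose inverse is the minimal main term of the Selberg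
sieve with weights supported on `d ≤ R`. -/
noncomputable def selbergSum (s : BoundingSieve) (R : ℕ) : ℝ :=
  ∑ l ∈ s.prodPrimes.divisors with l ≤ R, s.selbergTerms l

/-- The weights supported on `d ≤ R` that minimise the main term of the Selberg sieve. -/
noncomputable def selbergWeights (s : BoundingSieve) (R d : ℕ) : ℝ :=
  if d ∣ s.prodPrimes then
    (s.nu d)⁻¹ * moebius d *
      ((∑ l ∈ s.prodPrimes.divisors with l ≤ R ∧ d ∣ l, s.selbergTerms l) / selbergSum s R)
  else 0

variable (s : BoundingSieve) {R : ℕ}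

theorem one_le_selbergSum (hR : 1 ≤ R) : 1 ≤ selbergSum s R := by
  rw [← selbergTerms_isMultiplicative (s := s).map_one]
  exact single_le_sum (f := s.selbergTerms)
    (fun l hl => (selbergTerms_pos (Nat.dvd_of_mem_divisors (mem_filter.1 hl).1)).le)
    (mem_filter.2 ⟨Nat.one_mem_divisors.2 prodPrimes_ne_zero, hR⟩)

theorem selbergWeights_one (hR : 1 ≤ R) : selbergWeights s R 1 = 1 := by
  have selbergSum_ne_zero : selbergSum s R ≠ 0 := (one_pos.trans_le (one_le_selbergSum s hR)).ne'
  simp only [selbergWeights, one_dvd, and_true, if_true, s.nu_mult.map_one, moebius_apply_one,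
    inv_one, Int.cast_one, one_mul]
  exact div_self selbergSum_ne_zero

theorem selbergWeights_eq_zero {d : ℕ} (hd : R < d) : selbergWeights s R d = 0 := by
  rw [selbergWeights, filter_false_of_mem, sum_empty, zero_div, mul_zero, ite_self]
  rintro l hl ⟨hlR, hdl⟩
  exact (hlR.trans_lt hd).not_ge (Nat.le_of_dvd (Nat.pos_of_mem_divisors hl) hdl)

theorem abs_selbergWeights_le (hR : 1 ≤ R) {d : ℕ} (hd : d ∣ s.prodPrimes) :
    |selbergWeights s R d| ≤ (s.nu d)⁻¹ := by
  have selbergSum_pos : 0 < selbergSum s R := one_pos.trans_le (one_le_selbergSum s hR)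
  have inv_nu_pos : 0 < (s.nu d)⁻¹ := inv_pos.2 (nu_pos_of_dvd_prodPrimes hd)
  have selbergTerms_nonneg {l : ℕ} (hl : l ∈ s.prodPrimes.divisors) : 0 ≤ s.selbergTerms l :=
    (selbergTerms_pos (Nat.dvd_of_mem_divisors hl)).le
  have numerator_nonneg : 0 ≤ ∑ l ∈ s.prodPrimes.divisors with l ≤ R ∧ d ∣ l, s.selbergTerms l :=
    sum_nonneg fun l hl => selbergTerms_nonneg (mem_filter.1 hl).1
  have numerator_le :
      ∑ l ∈ s.prodPrimes.divisors with l ≤ R ∧ d ∣ l, s.selbergTerms l ≤ selbergSum s R :=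
    sum_le_sum_of_subset_of_nonneg (monotone_filter_right _ fun _ _ h => h.1)
      fun l hl _ => selbergTerms_nonneg (mem_filter.1 hl).1
  rw [selbergWeights, if_pos hd, abs_mul, abs_mul, abs_of_pos inv_nu_pos, mul_assoc,
    abs_of_nonneg (div_nonneg numerator_nonneg selbergSum_pos.le)]
  exact mul_le_of_le_one_right inv_nu_pos.le (mul_le_one₀ (mod_cast abs_moebius_le_one)
    (div_nonneg numerator_nonneg selbergSum_pos.le) (div_le_one_of_le₀ numerator_le
      selbergSum_pos.le))

theorem sum_nu_mul_selbergWeights {l : ℕ} (hl : l ∣ s.prodPrimes) :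
    (∑ d ∈ s.prodPrimes.divisors, if l ∣ d then s.nu d * selbergWeights s R d else 0) =
      if l ≤ R then moebius l * s.selbergTerms l / selbergSum s R else 0 := by
  have nu_mul_selbergWeights (d : ℕ) (hd : d ∈ s.prodPrimes.divisors) :
      s.nu d * selbergWeights s R d = ∑ e ∈ s.prodPrimes.divisors with e ≤ R,
        if d ∣ e then s.selbergTerms e / selbergSum s R * moebius d else 0 := by
    rw [selbergWeights, if_pos (Nat.dvd_of_mem_divisors hd), ← mul_assoc, ← mul_assoc,
      mul_inv_cancel₀ (nu_ne_zero (Nat.dvd_of_mem_divisors hd)), one_mul, sum_div, mul_sum,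
      ← filter_filter, sum_filter]
    exact sum_congr rfl fun e _ => by rw [mul_comm]
  calc (∑ d ∈ s.prodPrimes.divisors, if l ∣ d then s.nu d * selbergWeights s R d else 0)
      = ∑ d ∈ s.prodPrimes.divisors with l ∣ d, ∑ e ∈ s.prodPrimes.divisors with e ≤ R,
          if d ∣ e then s.selbergTerms e / selbergSum s R * moebius d else 0 := by
        rw [← sum_filter]
        exact sum_congr rfl fun d hd => nu_mul_selbergWeights d (mem_filter.1 hd).1
    _ = ∑ e ∈ s.prodPrimes.divisors with e ≤ R, s.selbergTerms e / selbergSum s R *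
          ∑ d ∈ e.divisors with l ∣ d, (moebius d : ℝ) := by
        rw [sum_comm]
        refine sum_congr rfl fun e he => ?_
        rw [← sum_filter, filter_comm, Nat.divisors_filter_dvd_of_dvd prodPrimes_ne_zero
          (Nat.dvd_of_mem_divisors (mem_filter.1 he).1), mul_sum]
    _ = ∑ e ∈ s.prodPrimes.divisors with e ≤ R,
          if l = e then s.selbergTerms e / selbergSum s R * moebius l else 0 := by
        refine sum_congr rfl fun e he => ?_
        rw [sum_moebius_divisors_filter_dvd (squarefree_of_dvd_prodPrimes
          (Nat.dvd_of_mem_divisors (mem_filter.1 he).1)), mul_ite, mul_zero]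
    _ = if l ≤ R then moebius l * s.selbergTerms l / selbergSum s R else 0 := by
        rw [sum_ite_eq]
        simp only [mem_filter, Nat.mem_divisors, hl, prodPrimes_ne_zero, ne_eq,
          not_false_eq_true, true_and, mul_comm (_ / _), mul_div_assoc]

theorem mainSum_lambdaSquared_selbergWeights (hR : 1 ≤ R) :
    s.mainSum (lambdaSquared (selbergWeights s R)) = (selbergSum s R)⁻¹ := by
  have selbergSum_ne_zero : selbergSum s R ≠ 0 := (one_pos.trans_le (one_le_selbergSum s hR)).ne'
  have diagonal_term (l : ℕ) (hl : l ∈ s.prodPrimes.divisors) : (s.selbergTerms l)⁻¹ *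
      (∑ d ∈ s.prodPrimes.divisors, if l ∣ d then s.nu d * selbergWeights s R d else 0) ^ 2 =
        if l ≤ R then s.selbergTerms l * (selbergSum s R)⁻¹ ^ 2 else 0 := by
    have hlP := Nat.dvd_of_mem_divisors hl
    have := (selbergTerms_pos hlP).ne'
    have moebius_sq : (moebius l : ℝ) ^ 2 = 1 :=
      mod_cast moebius_sq_eq_one_of_squarefree (squarefree_of_dvd_prodPrimes hlP)
    rw [sum_nu_mul_selbergWeights s hlP, ite_pow, div_pow, mul_pow, moebius_sq, mul_ite,
      zero_pow two_ne_zero, mul_zero]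
    field_simp
  rw [mainSum_lambdaSquared_eq_sum_mul_sum_sq, sum_congr rfl diagonal_term, ← sum_filter,
    ← sum_mul, ← selbergSum]
  field_simp

theorem errSum_lambdaSquared_le (w : ℕ → ℝ) :
    s.errSum (lambdaSquared w) ≤ ∑ d₁ ∈ s.prodPrimes.divisors, ∑ d₂ ∈ s.prodPrimes.divisors,
      |w d₁| * |w d₂| * |s.rem (d₁.lcm d₂)| := by
  have abs_lambdaSquared_le (d : ℕ) (hd : d ∈ s.prodPrimes.divisors) :
      |lambdaSquared w d| ≤ ∑ d₁ ∈ s.prodPrimes.divisors, ∑ d₂ ∈ s.prodPrimes.divisors,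
        if d = d₁.lcm d₂ then |w d₁| * |w d₂| else 0 := by
    have divisors_subset : d.divisors ⊆ s.prodPrimes.divisors :=
      Nat.divisors_subset_of_dvd prodPrimes_ne_zero (Nat.dvd_of_mem_divisors hd)
    have term_nonneg (d₁ d₂ : ℕ) : 0 ≤ if d = d₁.lcm d₂ then |w d₁| * |w d₂| else 0 := by
      positivity
    calc |lambdaSquared w d|
        ≤ ∑ d₁ ∈ d.divisors, ∑ d₂ ∈ d.divisors,
            if d = d₁.lcm d₂ then |w d₁| * |w d₂| else 0 := by
          refine (abs_sum_le_sum_abs _ _).trans (sum_le_sum fun d₁ _ =>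
            (abs_sum_le_sum_abs _ _).trans (sum_le_sum fun d₂ _ => ?_))
          rw [apply_ite abs, abs_mul, abs_zero]
      _ ≤ _ := by
          refine (sum_le_sum_of_subset_of_nonneg divisors_subset fun d₁ _ _ =>
            sum_nonneg fun d₂ _ => term_nonneg d₁ d₂).trans (sum_le_sum fun d₁ _ =>
              sum_le_sum_of_subset_of_nonneg divisors_subset fun d₂ _ _ => term_nonneg d₁ d₂)
  calc s.errSum (lambdaSquared w)
      ≤ ∑ d ∈ s.prodPrimes.divisors, ∑ d₁ ∈ s.prodPrimes.divisors, ∑ d₂ ∈ s.prodPrimes.divisors,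
          if d = d₁.lcm d₂ then |w d₁| * |w d₂| * |s.rem d| else 0 := by
        refine sum_le_sum fun d hd => ?_
        grw [abs_lambdaSquared_le d hd]
        simp only [sum_mul, ite_mul, zero_mul, le_refl]
    _ = _ := by
        rw [sum_comm]
        refine sum_congr rfl fun d₁ hd₁ => ?_
        rw [sum_comm]
        refine sum_congr rfl fun d₂ hd₂ => ?_
        rw [sum_ite_eq', if_pos (Nat.mem_divisors.2 ⟨Nat.lcm_dvd (Nat.dvd_of_mem_divisors hd₁)
          (Nat.dvd_of_mem_divisors hd₂), prodPrimes_ne_zero⟩)]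

theorem errSum_lambdaSquared_le_sq (hrem : ∀ d, d ∣ s.prodPrimes → |s.rem d| ≤ d) (w : ℕ → ℝ) :
    s.errSum (lambdaSquared w) ≤ (∑ d ∈ s.prodPrimes.divisors, |w d| * d) ^ 2 := by
  refine (errSum_lambdaSquared_le s w).trans ?_
  rw [sq, sum_mul_sum]
  refine sum_le_sum fun d₁ hd₁ => sum_le_sum fun d₂ hd₂ => ?_
  have rem_lcm_le : |s.rem (d₁.lcm d₂)| ≤ (d₁ * d₂ : ℝ) :=
    (hrem _ (Nat.lcm_dvd (Nat.dvd_of_mem_divisors hd₁) (Nat.dvd_of_mem_divisors hd₂))).trans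
      (mod_cast Nat.div_le_self (d₁ * d₂) (d₁.gcd d₂))
  calc |w d₁| * |w d₂| * |s.rem (d₁.lcm d₂)| ≤ |w d₁| * |w d₂| * (d₁ * d₂) := by gcongr
    _ = |w d₁| * d₁ * (|w d₂| * d₂) := by ring

theorem sum_abs_selbergWeights_mul_le (hR : 1 ≤ R)
    (hnu : ∀ d, d ∣ s.prodPrimes → (s.nu d)⁻¹ ≤ d) :
    ∑ d ∈ s.prodPrimes.divisors, |selbergWeights s R d| * d ≤ (R : ℝ) ^ 3 := by
  calc ∑ d ∈ s.prodPrimes.divisors, |selbergWeights s R d| * d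
      = ∑ d ∈ s.prodPrimes.divisors with d ≤ R, |selbergWeights s R d| * d := by
        refine (sum_filter_of_ne fun d _ hd => not_lt.1 fun hRd => hd ?_).symm
        rw [selbergWeights_eq_zero s hRd, abs_zero, zero_mul]
    _ ≤ ∑ d ∈ s.prodPrimes.divisors with d ≤ R, (R : ℝ) ^ 2 := by
        refine sum_le_sum fun d hd => ?_
        have hdR : (d : ℝ) ≤ R := mod_cast (mem_filter.1 hd).2
        have hdP := Nat.dvd_of_mem_divisors (mem_filter.1 hd).1
        rw [sq]
        exact mul_le_mul ((abs_selbergWeights_le s hR hdP).trans ((hnu d hdP).trans hdR)) hdR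
          d.cast_nonneg R.cast_nonneg
    _ ≤ ∑ _d ∈ Icc 1 R, (R : ℝ) ^ 2 := by
        refine sum_le_sum_of_subset_of_nonneg (fun d hd => mem_Icc.2 ?_) fun _ _ _ => by positivity
        exact ⟨Nat.pos_of_mem_divisors (mem_filter.1 hd).1, (mem_filter.1 hd).2⟩
    _ = (R : ℝ) ^ 3 := by
        rw [sum_const, Nat.card_Icc, Nat.add_sub_cancel, nsmul_eq_mul, ← pow_succ']

theorem siftedSum_le_totalMass_div_selbergSum_add (hR : 1 ≤ R)
    (hnu : ∀ d, d ∣ s.prodPrimes → (s.nu d)⁻¹ ≤ d)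
    (hrem : ∀ d, d ∣ s.prodPrimes → |s.rem d| ≤ d) :
    s.siftedSum ≤ s.totalMass / selbergSum s R + (R : ℝ) ^ 6 := by
  calc s.siftedSum
      ≤ s.totalMass * s.mainSum (lambdaSquared (selbergWeights s R)) +
          s.errSum (lambdaSquared (selbergWeights s R)) :=
        siftedSum_le_mainSum_errSum_of_upperMoebius _
          (upperMoebius_lambdaSquared _ (selbergWeights_one s hR))
    _ ≤ s.totalMass / selbergSum s R + ((R : ℝ) ^ 3) ^ 2 := by
        grw [errSum_lambdaSquared_le_sq s hrem, sum_abs_selbergWeights_mul_le s hR hnu,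
          mainSum_lambdaSquared_selbergWeights s hR, div_eq_mul_inv]
    _ = s.totalMass / selbergSum s R + (R : ℝ) ^ 6 := by rw [← pow_mul]

end SelbergSieve

section SelbergSumLowerBound

open BoundingSieve Finset UniqueFactorizationMonoid

/-- The completely multiplicative function on `ℕ` with the prescribed values on primes. -/
noncomputable def completelyMultiplicative (g : ℕ → ℝ) : ℕ →* ℝ where
  toFun n := if n = 0 then 0 else n.factorization.prod fun p k => g p ^ k
  map_one' := by simp
  map_mul' a b := by
    by_cases ha : a = 0
    · simp [ha]
    by_cases hb : b = 0
    · simp [hb]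
    simp only [mul_eq_zero, ha, hb, or_self, if_false]
    rw [Nat.factorization_mul ha hb]
    exact Finsupp.prod_add_index' (fun _ => pow_zero _) (fun _ _ _ => pow_add _ _ _)

theorem completelyMultiplicative_apply_of_ne_zero (g : ℕ → ℝ) {n : ℕ} (hn : n ≠ 0) :
    completelyMultiplicative g n = n.factorization.prod fun p k => g p ^ k :=
  if_neg hn

theorem completelyMultiplicative_prime (g : ℕ → ℝ) {p : ℕ} (hp : p.Prime) :
    completelyMultiplicative g p = g p := by
  rw [completelyMultiplicative_apply_of_ne_zero g hp.ne_zero, hp.factorization,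
    Finsupp.prod_single_index (h := fun p k => g p ^ k) (pow_zero _), pow_one]

theorem completelyMultiplicative_nonneg {g : ℕ → ℝ} (hg : ∀ p, p.Prime → 0 ≤ g p) (n : ℕ) :
    0 ≤ completelyMultiplicative g n := by
  rcases eq_or_ne n 0 with rfl | hn
  · exact le_rfl
  · rw [completelyMultiplicative_apply_of_ne_zero g hn]
    exact prod_nonneg fun p hp => pow_nonneg (hg p (Nat.prime_of_mem_primeFactors hp)) _

theorem sum_le_prod_inv_one_sub {f : ℕ →* ℝ} (hf0 : ∀ n, 0 ≤ f n)
    (hf1 : ∀ p, p.Prime → f p < 1) {S F : Finset ℕ}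
    (hF : ∀ n ∈ F, n ∈ Nat.factoredNumbers S) :
    ∑ n ∈ F, f n ≤ ∏ p ∈ S with p.Prime, (1 - f p)⁻¹ := by
  have eulerProduct := (EulerProduct.summable_and_hasSum_factoredNumbers_prod_filter_prime_geometric
    (fun {p} hp => (Real.norm_of_nonneg (hf0 p)).trans_lt (hf1 p hp)) S).2
  calc ∑ n ∈ F, f n
      = ∑ n ∈ F, (Nat.factoredNumbers S).indicator f n :=
        sum_congr rfl fun n hn => (Set.indicator_of_mem (hF n hn) f).symm
    _ ≤ ∏ p ∈ S with p.Prime, (1 - f p)⁻¹ :=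
        sum_le_hasSum F (fun n _ => Set.indicator_nonneg (fun n _ => hf0 n) n)
          (hasSum_subtype_iff_indicator.1 eulerProduct)

theorem sum_radical_eq_le {f : ℕ →* ℝ} (hf0 : ∀ n, 0 ≤ f n) (hf1 : ∀ p, p.Prime → f p < 1)
    {F : Finset ℕ} {l : ℕ} (hF : ∀ n ∈ F, n ≠ 0 ∧ radical n = l) :
    ∑ n ∈ F, f n ≤ f l * ∏ p ∈ l.primeFactors, (1 - f p)⁻¹ := by
  have mul_div_cancel {n : ℕ} (hn : n ∈ F) : l * (n / l) = n :=
    Nat.mul_div_cancel' ((hF n hn).2 ▸ radical_dvd_self)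
  have div_injOn : Set.InjOn (· / l) (F : Set ℕ) := fun x hx y hy hxy => by
    rw [← mul_div_cancel hx, ← mul_div_cancel hy]
    exact congrArg (l * ·) hxy
  have div_mem_factoredNumbers (k : ℕ) (hk : k ∈ F.image (· / l)) :
      k ∈ Nat.factoredNumbers l.primeFactors := by
    obtain ⟨n, hn, rfl⟩ := mem_image.1 hk
    refine Nat.mem_factoredNumbers'.2 fun p hp hpk => ?_
    rw [← (hF n hn).2, Nat.primeFactors_radical]
    exact Nat.mem_primeFactors.2
      ⟨hp, (mul_div_cancel hn).subst (hpk.mul_left l), (hF n hn).1⟩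
  calc ∑ n ∈ F, f n
      = f l * ∑ k ∈ F.image (· / l), f k := by
        rw [sum_image div_injOn, mul_sum]
        exact sum_congr rfl fun n hn => by rw [← map_mul, mul_div_cancel hn]
    _ ≤ f l * ∏ p ∈ l.primeFactors with p.Prime, (1 - f p)⁻¹ :=
        mul_le_mul_of_nonneg_left (sum_le_prod_inv_one_sub hf0 hf1 div_mem_factoredNumbers) (hf0 l)
    _ = f l * ∏ p ∈ l.primeFactors, (1 - f p)⁻¹ := by
        rw [filter_true_of_mem fun p hp => Nat.prime_of_mem_primeFactors hp]

theorem sum_le_selbergSum (s : BoundingSieve) {R : ℕ}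
    (hR : ∀ l ≤ R, Squarefree l → l ∣ s.prodPrimes) {f : ℕ →* ℝ} (hf0 : ∀ n, 0 ≤ f n)
    (hf1 : ∀ p, p.Prime → f p < 1) (hf : ∀ p, p.Prime → p ∣ s.prodPrimes → f p = s.nu p) :
    ∑ n ∈ Icc 1 R, f n ≤ selbergSum s R := by
  have radical_mem (n : ℕ) (hn : n ∈ Icc 1 R) :
      radical n ∈ {l ∈ s.prodPrimes.divisors | l ≤ R} := by
    obtain ⟨hn1, hnR⟩ := mem_Icc.1 hn
    have radical_le : radical n ≤ R := (Nat.le_of_dvd hn1 radical_dvd_self).trans hnR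
    exact mem_filter.2 ⟨Nat.mem_divisors.2 ⟨hR _ radical_le squarefree_radical,
      prodPrimes_ne_zero⟩, radical_le⟩
  rw [← sum_fiberwise_of_maps_to radical_mem]
  refine sum_le_sum fun l hl => ?_
  have hlP := Nat.dvd_of_mem_divisors (mem_filter.1 hl).1
  have f_prime_eq (p : ℕ) (hp : p ∈ l.primeFactors) : f p = s.nu p :=
    hf p (Nat.prime_of_mem_primeFactors hp) ((Nat.dvd_of_mem_primeFactors hp).trans hlP)
  have f_eq : f l = s.nu l := by
    rw [← prod_primeFactors_nu hlP, ← prod_congr rfl f_prime_eq, ← map_prod,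
      Nat.prod_primeFactors_of_squarefree (squarefree_of_dvd_prodPrimes hlP)]
  calc ∑ n ∈ Icc 1 R with radical n = l, f n
      ≤ f l * ∏ p ∈ l.primeFactors, (1 - f p)⁻¹ :=
        sum_radical_eq_le hf0 hf1 fun n hn => ⟨Nat.one_le_iff_ne_zero.1
          (mem_Icc.1 (mem_filter.1 hn).1).1, (mem_filter.1 hn).2⟩
    _ = s.selbergTerms l := by
        rw [selbergTerms_apply, f_eq, prod_congr rfl fun p hp => by rw [f_prime_eq p hp]]

theorem card_coprime_divisors_le {m : ℕ} {f : ℕ →* ℝ}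
    (hf : ∀ p, p.Prime → (if p ∣ m then 1 else 2 : ℝ) ≤ p * f p) {n : ℕ} (hn : n ≠ 0) :
    (#{b ∈ n.divisors | m.Coprime b} : ℝ) ≤ n * f n := by
  induction n using induction_on_primes with
  | zero => exact absurd rfl hn
  | one =>
    rw [map_one, Nat.cast_one, mul_one, Nat.divisors_one]
    exact_mod_cast card_filter_le _ _
  | prime_mul p k hp ih =>
    have hk : k ≠ 0 := right_ne_zero_of_mul hn
    set A := {b ∈ k.divisors | m.Coprime b}
    have mem_of_not_dvd {b : ℕ} (hb : b ∈ {b ∈ (p * k).divisors | m.Coprime b}) (hpb : ¬p ∣ b) :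
        b ∈ A := by
      obtain ⟨hbd, hmb⟩ := mem_filter.1 hb
      exact mem_filter.2 ⟨Nat.mem_divisors.2
        ⟨(hp.coprime_iff_not_dvd.2 hpb).symm.dvd_of_dvd_mul_left (Nat.dvd_of_mem_divisors hbd), hk⟩,
        hmb⟩
    have card_le : #{b ∈ (p * k).divisors | m.Coprime b} ≤ (if p ∣ m then 1 else 2) * #A := by
      split_ifs with hpm
      · rw [one_mul]
        exact card_le_card fun b hb => mem_of_not_dvd hb fun hpb =>
          Nat.not_coprime_of_dvd_of_dvd hp.one_lt hpm hpb (mem_filter.1 hb).2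
      · have subset_union : {b ∈ (p * k).divisors | m.Coprime b} ⊆ A ∪ A.image (p * ·) := by
          intro b hb
          by_cases hpb : p ∣ b
          · obtain ⟨c, rfl⟩ := hpb
            obtain ⟨hbd, hmb⟩ := mem_filter.1 hb
            exact mem_union_right _ (mem_image_of_mem _ (mem_filter.2
              ⟨Nat.mem_divisors.2 ⟨Nat.dvd_of_mul_dvd_mul_left hp.pos
                (Nat.dvd_of_mem_divisors hbd), hk⟩, hmb.coprime_mul_left_right⟩))
          · exact mem_union_left _ (mem_of_not_dvd hb hpb)
        grw [subset_union, card_union_le, card_image_le, two_mul]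
    calc (#{b ∈ (p * k).divisors | m.Coprime b} : ℝ)
        ≤ (if p ∣ m then 1 else 2) * #A := mod_cast card_le
      _ ≤ p * f p * (k * f k) :=
          mul_le_mul (hf p hp) (ih hk) (#A).cast_nonneg (le_trans (by split_ifs <;> simp) (hf p hp))
      _ = (p * k : ℕ) * f (p * k) := by
          rw [map_mul, Nat.cast_mul]
          ring

theorem sum_filter_dvd_inv_le {p : ℕ} (hp : 0 < p) {A : Finset ℕ}
    (hA : ∀ c, p * c ∈ A → c ∈ A) :
    ∑ b ∈ A with p ∣ b, (b : ℝ)⁻¹ ≤ (p : ℝ)⁻¹ * ∑ b ∈ A, (b : ℝ)⁻¹ := by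
  have subset_image : {b ∈ A | p ∣ b} ⊆ A.image (p * ·) := by
    intro b hb
    obtain ⟨hbA, c, rfl⟩ := mem_filter.1 hb
    exact mem_image_of_mem _ (hA c hbA)
  calc ∑ b ∈ A with p ∣ b, (b : ℝ)⁻¹
      ≤ ∑ b ∈ A.image (p * ·), (b : ℝ)⁻¹ :=
        sum_le_sum_of_subset_of_nonneg subset_image fun _ _ _ => by positivity
    _ = (p : ℝ)⁻¹ * ∑ b ∈ A, (b : ℝ)⁻¹ := by
        rw [sum_image fun x _ y _ h => Nat.eq_of_mul_eq_mul_left hp h, mul_sum]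
        exact sum_congr rfl fun b _ => by rw [Nat.cast_mul, mul_inv]

theorem totient_div_mul_sum_inv_le {m : ℕ} (hm : m ≠ 0) (Q : ℕ) :
    (m.totient / m : ℝ) * ∑ b ∈ Icc 1 Q, (b : ℝ)⁻¹ ≤
      ∑ b ∈ Icc 1 Q with m.Coprime b, (b : ℝ)⁻¹ := by
  induction m using induction_on_primes with
  | zero => exact absurd rfl hm
  | one => simp
  | prime_mul p k hp ih =>
    have hp0 : (0 : ℝ) < p := mod_cast hp.pos
    have coprime_iff (b : ℕ) : (p * k).Coprime b ↔ k.Coprime b ∧ ¬p ∣ b := by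
      rw [Nat.coprime_mul_iff_left, hp.coprime_iff_not_dvd, and_comm]
    have ih := ih (right_ne_zero_of_mul hm)
    by_cases hpk : p ∣ k
    · rw [Nat.totient_mul_of_prime_of_dvd hp hpk, Nat.cast_mul, Nat.cast_mul,
        mul_div_mul_left _ _ hp0.ne']
      refine ih.trans_eq (sum_congr (filter_congr fun b _ => ?_) fun _ _ => rfl)
      rw [coprime_iff]
      exact ⟨fun h => ⟨h, fun hpb => Nat.not_coprime_of_dvd_of_dvd hp.one_lt hpk hpb h⟩, And.left⟩
    · have sum_split := sum_filter_add_sum_filter_not {b ∈ Icc 1 Q | k.Coprime b} (p ∣ ·)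
        (fun b : ℕ => (b : ℝ)⁻¹)
      have sum_dvd_le : ∑ b ∈ {b ∈ Icc 1 Q | k.Coprime b} with p ∣ b, (b : ℝ)⁻¹ ≤
          (p : ℝ)⁻¹ * ∑ b ∈ Icc 1 Q with k.Coprime b, (b : ℝ)⁻¹ := by
        refine sum_filter_dvd_inv_le hp.pos fun c hc => ?_
        obtain ⟨hcQ, hkc⟩ := mem_filter.1 hc
        obtain ⟨hc1, hcQ⟩ := mem_Icc.1 hcQ
        exact mem_filter.2 ⟨mem_Icc.2 ⟨Nat.pos_of_mul_pos_left hc1,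
          (Nat.le_mul_of_pos_left c hp.pos).trans hcQ⟩, hkc.coprime_mul_left_right⟩
      calc ((p * k).totient / (p * k : ℕ) : ℝ) * ∑ b ∈ Icc 1 Q, (b : ℝ)⁻¹
          = (1 - (p : ℝ)⁻¹) * (k.totient / k * ∑ b ∈ Icc 1 Q, (b : ℝ)⁻¹) := by
            rw [Nat.totient_mul_of_prime_of_not_dvd hp hpk, Nat.cast_mul, Nat.cast_mul,
              Nat.cast_sub hp.one_le]
            field_simp
            ring
        _ ≤ (1 - (p : ℝ)⁻¹) * ∑ b ∈ Icc 1 Q with k.Coprime b, (b : ℝ)⁻¹ :=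
            mul_le_mul_of_nonneg_left ih (sub_nonneg.2 (inv_le_one_of_one_le₀
              (mod_cast hp.one_le)))
        _ ≤ ∑ b ∈ Icc 1 Q with (p * k).Coprime b, (b : ℝ)⁻¹ := by
            simp only [coprime_iff, ← filter_filter]
            linarith

theorem sum_inv_mul_sum_coprime_inv_le {m : ℕ} (Q : ℕ) {f : ℕ →* ℝ}
    (hf : ∀ p, p.Prime → (if p ∣ m then 1 else 2 : ℝ) ≤ p * f p) :
    (∑ a ∈ Icc 1 Q, (a : ℝ)⁻¹) * ∑ b ∈ Icc 1 Q with m.Coprime b, (b : ℝ)⁻¹ ≤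
      ∑ n ∈ Icc 1 (Q ^ 2), f n := by
  set B := {b ∈ Icc 1 Q | m.Coprime b}
  have mul_mem (x : ℕ × ℕ) (hx : x ∈ Icc 1 Q ×ˢ B) : x.1 * x.2 ∈ Icc 1 (Q ^ 2) := by
    obtain ⟨hx₁, hx₂⟩ := mem_product.1 hx
    obtain ⟨one_le_fst, fst_le⟩ := mem_Icc.1 hx₁
    obtain ⟨one_le_snd, snd_le⟩ := mem_Icc.1 (mem_filter.1 hx₂).1
    exact mem_Icc.2 ⟨Nat.mul_pos one_le_fst one_le_snd, sq Q ▸ Nat.mul_le_mul fst_le snd_le⟩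
  rw [sum_mul_sum, ← sum_product' (Icc 1 Q) B fun a b : ℕ => (a : ℝ)⁻¹ * (b : ℝ)⁻¹,
    ← sum_fiberwise_of_maps_to mul_mem]
  refine sum_le_sum fun n hn => ?_
  have hn0 : n ≠ 0 := Nat.one_le_iff_ne_zero.1 (mem_Icc.1 hn).1
  have card_le : #{x ∈ Icc 1 Q ×ˢ B | x.1 * x.2 = n} ≤ #{b ∈ n.divisors | m.Coprime b} := by
    refine card_le_card_of_injOn Prod.snd (fun x hx => ?_) fun x hx y hy hxy => ?_
    · obtain ⟨hxB, rfl⟩ := mem_filter.1 hx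
      exact mem_filter.2 ⟨Nat.mem_divisors.2 ⟨dvd_mul_left _ _, hn0⟩,
        (mem_filter.1 (mem_product.1 hxB).2).2⟩
    · have mul_eq : x.1 * x.2 = y.1 * x.2 := by
        rw [(mem_filter.1 hx).2, hxy, (mem_filter.1 hy).2]
      have snd_ne_zero : x.2 ≠ 0 := right_ne_zero_of_mul ((mem_filter.1 hx).2.trans_ne hn0)
      exact Prod.ext (mul_right_cancel₀ snd_ne_zero mul_eq) hxy
  calc ∑ x ∈ Icc 1 Q ×ˢ B with x.1 * x.2 = n, (x.1 : ℝ)⁻¹ * (x.2 : ℝ)⁻¹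
      = ∑ x ∈ Icc 1 Q ×ˢ B with x.1 * x.2 = n, (n : ℝ)⁻¹ :=
        sum_congr rfl fun x hx => by rw [← mul_inv, ← Nat.cast_mul, (mem_filter.1 hx).2]
    _ = #{x ∈ Icc 1 Q ×ˢ B | x.1 * x.2 = n} * (n : ℝ)⁻¹ := by rw [sum_const, nsmul_eq_mul]
    _ ≤ n * f n * (n : ℝ)⁻¹ := by
        gcongr
        exact (Nat.cast_le.2 card_le).trans (card_coprime_divisors_le hf hn0)
    _ = f n := by field_simp

theorem log_add_one_le_sum_inv (Q : ℕ) : log (Q + 1) ≤ ∑ a ∈ Icc 1 Q, (a : ℝ)⁻¹ := by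
  have log_le := log_add_one_le_harmonic Q
  rw [harmonic_eq_sum_Icc] at log_le
  push_cast at log_le
  exact log_le

theorem totient_div_mul_log_sq_le_selbergSum (s : BoundingSieve) {m Q : ℕ} (hm0 : m ≠ 0)
    (hm : 2 ∣ m) (hQ : ∀ l ≤ Q ^ 2, Squarefree l → l ∣ s.prodPrimes)
    (hnu : ∀ p, p.Prime → p ∣ s.prodPrimes → s.nu p = (if p ∣ m then 1 else 2) / p) :
    (m.totient / m : ℝ) * log (Q + 1) ^ 2 ≤ selbergSum s (Q ^ 2) := by
  let g (p : ℕ) : ℝ := (if p ∣ m then 1 else 2) / p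
  let f := completelyMultiplicative g
  have f_prime (p : ℕ) (hp : p.Prime) : f p = g p := completelyMultiplicative_prime g hp
  have f_lt_one (p : ℕ) (hp : p.Prime) : f p < 1 := by
    rw [f_prime p hp, div_lt_one (mod_cast hp.pos)]
    split_ifs with hpm
    · exact_mod_cast hp.one_lt
    · exact_mod_cast hp.two_le.lt_of_ne fun h => hpm (h ▸ hm)
  have f_nonneg : ∀ n, 0 ≤ f n := completelyMultiplicative_nonneg fun p _ => by positivity
  have le_prime_mul (p : ℕ) (hp : p.Prime) : (if p ∣ m then 1 else 2 : ℝ) ≤ p * f p := by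
    rw [f_prime p hp, mul_div_cancel₀ _ (mod_cast hp.ne_zero)]
  have log_nonneg : 0 ≤ log (Q + 1 : ℝ) := log_nonneg (by simp)
  calc (m.totient / m : ℝ) * log (Q + 1) ^ 2
      ≤ (m.totient / m : ℝ) * (∑ a ∈ Icc 1 Q, (a : ℝ)⁻¹) ^ 2 := by
        grw [log_add_one_le_sum_inv]
    _ = (∑ a ∈ Icc 1 Q, (a : ℝ)⁻¹) * ((m.totient / m : ℝ) * ∑ b ∈ Icc 1 Q, (b : ℝ)⁻¹) := by ring
    _ ≤ (∑ a ∈ Icc 1 Q, (a : ℝ)⁻¹) * ∑ b ∈ Icc 1 Q with m.Coprime b, (b : ℝ)⁻¹ := by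
        grw [totient_div_mul_sum_inv_le hm0 Q]
    _ ≤ ∑ n ∈ Icc 1 (Q ^ 2), f n := sum_inv_mul_sum_coprime_inv_le Q le_prime_mul
    _ ≤ selbergSum s (Q ^ 2) := sum_le_selbergSum s hQ f_nonneg f_lt_one fun p hp hpP => by
        rw [f_prime p hp, hnu p hp hpP]

end SelbergSumLowerBound

section PolynomialSieve

open BoundingSieve Finset Polynomial

/-- The sieve problem of counting the `x ∈ [a, a + J)` for which `f x` is coprime to `P`. The
support consists of the values `|f x|`, weighted by the number of times they are taken. -/
noncomputable def polynomialSieve (f : ℤ[X]) (a J : ℕ) {P : ℕ} (hP : Squarefree P)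
    (hf : ∀ p, p.Prime → p ∣ P → rootCount f p ∈ Set.Ioo 0 p) : BoundingSieve where
  support := (Ico a (a + J)).image fun x : ℕ => (f.eval (x : ℤ)).natAbs
  prodPrimes := P
  prodPrimes_squarefree := hP
  weights n := #{x ∈ Ico a (a + J) | (f.eval ((x : ℕ) : ℤ)).natAbs = n}
  weights_nonneg _ := Nat.cast_nonneg _
  totalMass := J
  nu := rootDensity f
  nu_mult := rootDensity_isMultiplicative f
  nu_pos_of_prime p hp hpP := div_pos (mod_cast (hf p hp hpP).1) (mod_cast hp.pos)
  nu_lt_one_of_prime p hp hpP :=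
    (div_lt_one (mod_cast hp.pos)).2 (mod_cast (hf p hp hpP).2)

variable (f : ℤ[X]) (a J : ℕ) {P : ℕ} (hP : Squarefree P)
  (hf : ∀ p, p.Prime → p ∣ P → rootCount f p ∈ Set.Ioo 0 p)

theorem sum_weights_polynomialSieve (p : ℕ → Prop) [DecidablePred p] :
    ∑ n ∈ (polynomialSieve f a J hP hf).support,
        (if p n then (polynomialSieve f a J hP hf).weights n else 0) =
      #{x ∈ Ico a (a + J) | p (f.eval ((x : ℕ) : ℤ)).natAbs} := by
  rw [natCast_card_filter, sum_comp (fun n => if p n then (1 : ℝ) else 0)]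
  simp only [polynomialSieve, nsmul_eq_mul, mul_ite, mul_one, mul_zero]

theorem card_coprime_eval_le {R : ℕ} (hR : 1 ≤ R) :
    (#{x ∈ Ico a (a + J) | P.Coprime (f.eval ((x : ℕ) : ℤ)).natAbs} : ℝ) ≤
      J / selbergSum (polynomialSieve f a J hP hf) R + (R : ℝ) ^ 6 := by
  set s := polynomialSieve f a J hP hf
  have inv_nu_le (d : ℕ) (hd : d ∣ s.prodPrimes) : (s.nu d)⁻¹ ≤ d := by
    have nu_pos : 0 < rootDensity f d := nu_pos_of_dvd_prodPrimes hd
    have rootCount_ne_zero : rootCount f d ≠ 0 := fun h => by simp [rootDensity_apply, h] at nu_pos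
    change (rootDensity f d)⁻¹ ≤ d
    rw [rootDensity_apply, inv_div]
    exact div_le_self d.cast_nonneg (mod_cast Nat.one_le_iff_ne_zero.2 rootCount_ne_zero)
  have abs_rem_le (d : ℕ) (hd : d ∣ s.prodPrimes) : |s.rem d| ≤ d := by
    have hd0 : d ≠ 0 := ne_zero_of_dvd_ne_zero prodPrimes_ne_zero hd
    rw [BoundingSieve.rem, multSum, sum_weights_polynomialSieve f a J hP hf (d ∣ ·)]
    exact (abs_card_Ico_dvd_eval_sub_le f a J hd0).trans (mod_cast rootCount_le f hd0)
  rw [← sum_weights_polynomialSieve f a J hP hf (P.Coprime ·)]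
  exact siftedSum_le_totalMass_div_selbergSum_add s hR inv_nu_le abs_rem_le

end PolynomialSieve

section GoldbachCount

open Finset Polynomial

/-- The polynomial `x (m - x)`, whose values are free of small primes when `x` and `m - x` are
large primes. -/
noncomputable def goldbachPoly (m : ℕ) : ℤ[X] := X * (C (m : ℤ) - X)

variable {m : ℕ}

theorem rootCount_goldbachPoly {p : ℕ} (hp : p.Prime) :
    rootCount (goldbachPoly m) p = if p ∣ m then 1 else 2 := by
  have : Fact p.Prime := ⟨hp⟩
  have roots_eq :
      ({x : ZMod p | aeval x (goldbachPoly m) = 0} : Finset (ZMod p)) = {0, (m : ZMod p)} := by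
    ext x
    simp [goldbachPoly, sub_eq_zero, eq_comm (a := (m : ZMod p))]
  rw [rootCount_eq_card_filter, roots_eq]
  split_ifs with hpm
  · rw [(ZMod.natCast_eq_zero_iff m p).2 hpm, pair_eq_singleton, card_singleton]
  · exact card_pair fun h => hpm ((ZMod.natCast_eq_zero_iff m p).1 h.symm)

theorem rootCount_goldbachPoly_mem_Ioo (hm : 2 ∣ m) {p : ℕ} (hp : p.Prime) :
    rootCount (goldbachPoly m) p ∈ Set.Ioo 0 p := by
  rw [rootCount_goldbachPoly hp]
  split_ifs with hpm
  · exact ⟨one_pos, hp.one_lt⟩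
  · exact ⟨two_pos, hp.two_le.lt_of_ne fun h => hpm (h ▸ hm)⟩

theorem coprime_primorial_eval_goldbachPoly {x R : ℕ} (hx : x.Prime) (hmx : (m - x).Prime)
    (hxR : R < x) (hmxR : R < m - x) :
    (primorial R).Coprime ((goldbachPoly m).eval (x : ℤ)).natAbs := by
  have hxm : x ≤ m := (Nat.lt_of_sub_pos hmx.pos).le
  have eval_eq : ((goldbachPoly m).eval (x : ℤ)).natAbs = x * (m - x) := by
    rw [goldbachPoly, eval_mul, eval_X, eval_sub, eval_C, eval_X, ← Nat.cast_sub hxm,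
      ← Nat.cast_mul, Int.natAbs_natCast]
  have coprime_primorial {q : ℕ} (hq : q.Prime) (hRq : R < q) : (primorial R).Coprime q :=
    (hq.coprime_iff_not_dvd.2 fun h => hRq.not_ge (hq.dvd_primorial_iff.1 h)).symm
  exact eval_eq ▸ (coprime_primorial hx hxR).mul_right (coprime_primorial hmx hmxR)

theorem card_goldbach_le_card_coprime_add (I : Finset ℕ) (R : ℕ) :
    #{x ∈ I | x.Prime ∧ (m - x).Prime} ≤
      #{x ∈ I | (primorial R).Coprime ((goldbachPoly m).eval ((x : ℕ) : ℤ)).natAbs} + 2 * R := by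
  set A := {x ∈ I | (primorial R).Coprime ((goldbachPoly m).eval ((x : ℕ) : ℤ)).natAbs}
  have subset_union : {x ∈ I | x.Prime ∧ (m - x).Prime} ⊆
      A ∪ (Icc 1 R ∪ (Icc 1 R).image (m - ·)) := by
    intro x hx
    obtain ⟨hxI, hxp, hmx⟩ := mem_filter.1 hx
    have hxm : x < m := Nat.lt_of_sub_pos hmx.pos
    simp only [mem_union, mem_image, mem_Icc]
    rcases le_or_gt x R with hxR | hxR
    · exact .inr (.inl ⟨hxp.one_le, hxR⟩)
    rcases le_or_gt (m - x) R with hmxR | hmxR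
    · exact .inr (.inr ⟨m - x, ⟨hmx.one_le, hmxR⟩, Nat.sub_sub_self hxm.le⟩)
    · exact .inl (mem_filter.2 ⟨hxI, coprime_primorial_eval_goldbachPoly hxp hmx hxR hmxR⟩)
  grw [subset_union, card_union_le, card_union_le, card_image_le, Nat.card_Icc, Nat.add_sub_cancel,
    two_mul]

theorem card_goldbach_Ico_le_of_level (hm0 : m ≠ 0) (hm : 2 ∣ m) (a J : ℕ) {Q : ℕ} (hQ : 1 ≤ Q) :
    (#{x ∈ Ico a (a + J) | x.Prime ∧ (m - x).Prime} : ℝ) ≤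
      J * (m / m.totient) / log (Q + 1) ^ 2 + 3 * (Q : ℝ) ^ 12 := by
  have rootCount_mem (p : ℕ) (hp : p.Prime) (_ : p ∣ primorial (Q ^ 2)) :=
    rootCount_goldbachPoly_mem_Ioo hm hp
  set s := polynomialSieve (goldbachPoly m) a J (squarefree_primorial (Q ^ 2)) rootCount_mem
  have selbergSum_ge : (m.totient / m : ℝ) * log (Q + 1) ^ 2 ≤ selbergSum s (Q ^ 2) :=
    totient_div_mul_log_sq_le_selbergSum s hm0 hm
      (fun l hl hl2 => hl2.dvd_primorial.trans (primorial_dvd_primorial hl))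
      fun p hp _ => by
        change rootDensity (goldbachPoly m) p = _
        rw [rootDensity_apply, rootCount_goldbachPoly hp, Nat.cast_ite, Nat.cast_one,
          Nat.cast_ofNat]
  have mainTerm_pos : 0 < (m.totient / m : ℝ) * log (Q + 1) ^ 2 := by
    have : 0 < log (Q + 1 : ℝ) := log_pos (lt_add_of_pos_left 1 (mod_cast hQ))
    positivity
  have sq_le_pow : (Q : ℝ) ^ 2 ≤ (Q : ℝ) ^ 12 := pow_le_pow_right₀ (mod_cast hQ) (by norm_num)
  calc (#{x ∈ Ico a (a + J) | x.Prime ∧ (m - x).Prime} : ℝ)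
      ≤ #{x ∈ Ico a (a + J) |
          (primorial (Q ^ 2)).Coprime ((goldbachPoly m).eval ((x : ℕ) : ℤ)).natAbs} +
            2 * (Q : ℝ) ^ 2 := mod_cast card_goldbach_le_card_coprime_add _ (Q ^ 2)
    _ ≤ J / selbergSum s (Q ^ 2) + ((Q ^ 2 : ℕ) : ℝ) ^ 6 + 2 * (Q : ℝ) ^ 2 := by
        grw [card_coprime_eval_le (goldbachPoly m) a J (squarefree_primorial _) rootCount_mem
          (Nat.one_le_pow 2 Q hQ)]
    _ ≤ J / (m.totient / m * log (Q + 1) ^ 2) + (Q : ℝ) ^ 12 + 2 * (Q : ℝ) ^ 12 := by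
        rw [Nat.cast_pow, ← pow_mul]
        gcongr
    _ = J * (m / m.totient) / log (Q + 1) ^ 2 + 3 * (Q : ℝ) ^ 12 := by
        rw [← div_div, div_div_eq_mul_div, mul_div_assoc (J : ℝ)]
        ring

theorem card_goldbach_Ico_le (hm0 : m ≠ 0) (hm : 2 ∣ m) (a : ℕ) {J : ℕ} (hJ : J ≠ 0) :
    (#{x ∈ Ico a (a + J) | x.Prime ∧ (m - x).Prime} : ℝ) ≤
      784 * (m / m.totient) * J / log (J + 1) ^ 2 := by
  set Q := Nat.nthRoot 14 J
  have one_le_Q : 1 ≤ Q :=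
    (Nat.le_nthRoot_iff (by norm_num)).2 (by simpa using Nat.one_le_iff_ne_zero.2 hJ)
  have pow_le_J : (Q : ℝ) ^ 14 ≤ J := mod_cast (Nat.le_nthRoot_iff (by norm_num)).1 le_rfl
  have J_lt_pow : (J + 1 : ℝ) ≤ (Q + 1) ^ 14 := mod_cast Nat.lt_pow_nthRoot_add_one (by norm_num) J
  have log_add_one_pos {n : ℕ} (hn : n ≠ 0) : 0 < log (n + 1 : ℝ) :=
    log_pos (lt_add_of_pos_left 1 (mod_cast Nat.pos_of_ne_zero hn))
  have logJ_pos := log_add_one_pos hJ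
  have logQ_pos := log_add_one_pos (Nat.one_le_iff_ne_zero.1 one_le_Q)
  have logQ_le : log (Q + 1 : ℝ) ≤ Q := by
    simpa using log_le_sub_one_of_pos (x := (Q + 1 : ℝ)) (by positivity)
  have logJ_le : log (J + 1 : ℝ) / 14 ≤ log (Q + 1) := by
    rw [div_le_iff₀' (by norm_num)]
    simpa using log_le_log (by positivity) J_lt_pow
  have error_le : (Q : ℝ) ^ 12 ≤ J / log (Q + 1) ^ 2 := by
    rw [le_div_iff₀ (by positivity)]
    calc (Q : ℝ) ^ 12 * log (Q + 1) ^ 2 ≤ (Q : ℝ) ^ 12 * Q ^ 2 := by gcongr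
      _ = (Q : ℝ) ^ 14 := by ring
      _ ≤ J := pow_le_J
  have one_le_ratio : (1 : ℝ) ≤ m / m.totient := by
    rw [one_le_div (mod_cast Nat.totient_pos.2 (Nat.pos_of_ne_zero hm0))]
    exact_mod_cast m.totient_le
  calc (#{x ∈ Ico a (a + J) | x.Prime ∧ (m - x).Prime} : ℝ)
      ≤ J * (m / m.totient) / log (Q + 1) ^ 2 + 3 * (Q : ℝ) ^ 12 :=
        card_goldbach_Ico_le_of_level hm0 hm a J one_le_Q
    _ ≤ J * (m / m.totient) / log (Q + 1) ^ 2 + 3 * (m / m.totient * (J / log (Q + 1) ^ 2)) := by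
        gcongr
        exact error_le.trans (le_mul_of_one_le_left (by positivity) one_le_ratio)
    _ = 4 * (m / m.totient) * J / log (Q + 1) ^ 2 := by ring
    _ ≤ 4 * (m / m.totient) * J / (log (J + 1) / 14) ^ 2 := by gcongr
    _ = 784 * (m / m.totient) * J / log (J + 1) ^ 2 := by
        field_simp
        norm_num

theorem sum_goldbach_inv_Ico_le (hm0 : m ≠ 0) (hm : 2 ∣ m) {N : ℕ} (hN : N ≠ 0) :
    ∑ x ∈ Ico N (N + N) with x.Prime ∧ (m - x).Prime, 1 / (x : ℝ) ≤
      784 * (m / m.totient) / log (N + 1) ^ 2 := by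
  have N_pos : (0 : ℝ) < N := mod_cast Nat.pos_of_ne_zero hN
  calc ∑ x ∈ Ico N (N + N) with x.Prime ∧ (m - x).Prime, 1 / (x : ℝ)
      ≤ #{x ∈ Ico N (N + N) | x.Prime ∧ (m - x).Prime} • (1 / (N : ℝ)) :=
        sum_le_card_nsmul _ _ _ fun x hx => one_div_le_one_div_of_le N_pos
          (mod_cast (mem_Ico.1 (mem_filter.1 hx).1).1)
    _ ≤ 784 * (m / m.totient) * N / log (N + 1) ^ 2 * (1 / N) := by
        rw [nsmul_eq_mul]
        grw [card_goldbach_Ico_le hm0 hm N hN]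
    _ = 784 * (m / m.totient) / log (N + 1) ^ 2 := by field_simp

end GoldbachCount

section DyadicSummation

open Finset

theorem add_one_div_three_le_log_two_pow_add_one (k : ℕ) :
    ((k : ℝ) + 1) / 3 ≤ log (2 ^ k + 1) := by
  have two_pow_le_sq : (2 : ℝ) ^ (k + 1) ≤ (2 ^ k + 1) ^ 2 := by
    nlinarith [pow_succ (2 : ℝ) k]
  have log_le := log_le_log (by positivity) two_pow_le_sq
  rw [log_pow, log_pow, Nat.cast_add_one, Nat.cast_ofNat] at log_le
  nlinarith [log_two_gt_d9]

theorem sum_le_two_mul_div_log {A : Finset ℕ} {g : ℕ → ℝ} {B M : ℝ} (hB : 0 ≤ B) (hM : 1 < M)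
    (hA : ∀ j ∈ A, M ≤ j)
    (hg : ∀ k : ℕ, ∑ j ∈ A with Nat.log 2 j = k, g j ≤ B / ((k : ℝ) + 1) ^ 2) :
    ∑ j ∈ A, g j ≤ 2 * B / log M := by
  have log_pos : 0 < log M := log_pos hM
  have log_le (j : ℕ) (hj : j ∈ A) : log M ≤ (Nat.log 2 j + 1 : ℕ) := by
    have j_le : (j : ℝ) ≤ 2 ^ (Nat.log 2 j + 1) :=
      mod_cast (Nat.lt_pow_succ_log_self (by norm_num) j).le
    calc log M ≤ log (2 ^ (Nat.log 2 j + 1)) :=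
          log_le_log (by positivity) ((hA j hj).trans j_le)
      _ = (Nat.log 2 j + 1 : ℕ) * log 2 := log_pow _ _
      _ ≤ (Nat.log 2 j + 1 : ℕ) :=
          mul_le_of_le_one_right (Nat.cast_nonneg _) (log_two_lt_d9.le.trans (by norm_num))
  set K := ⌈log M⌉₊
  have K_pos : 0 < K := Nat.ceil_pos.2 log_pos
  have log_mem (j : ℕ) (hj : j ∈ A) : Nat.log 2 j + 1 ∈ Ioo (K - 1) (A.sup id + 2) := by
    have le_sup : j ≤ A.sup id := le_sup (f := id) hj
    have K_le : K ≤ Nat.log 2 j + 1 := Nat.ceil_le.2 (log_le j hj)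
    have log_le_self := Nat.log_le_self 2 j
    exact mem_Ioo.2 ⟨by lia, by lia⟩
  calc ∑ j ∈ A, g j
      = ∑ i ∈ Ioo (K - 1) (A.sup id + 2), ∑ j ∈ A with Nat.log 2 j + 1 = i, g j :=
        (sum_fiberwise_of_maps_to log_mem g).symm
    _ ≤ ∑ i ∈ Ioo (K - 1) (A.sup id + 2), B * ((i : ℝ) ^ 2)⁻¹ := by
        refine sum_le_sum fun i hi => ?_
        obtain ⟨k, rfl⟩ := Nat.exists_eq_add_one_of_ne_zero (Nat.ne_zero_of_lt (mem_Ioo.1 hi).1)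
        simpa only [Nat.add_right_cancel_iff, Nat.cast_add_one, div_eq_mul_inv] using hg k
    _ ≤ B * (2 / ((K - 1 : ℕ) + 1)) := by
        rw [← mul_sum]
        exact mul_le_mul_of_nonneg_left (sum_Ioo_inv_sq_le _ _) hB
    _ = 2 * B / K := by
        rw [← Nat.cast_add_one, Nat.sub_add_cancel K_pos]
        ring
    _ ≤ 2 * B / log M := by
        grw [← Nat.le_ceil (log M)]

theorem sum_goldbach_inv_le {m : ℕ} (hm0 : m ≠ 0) (hm : 2 ∣ m) {A : Finset ℕ} {M : ℝ}
    (hM : 1 < M) (hA : ∀ j ∈ A, M ≤ j ∧ j.Prime ∧ (m - j).Prime) :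
    ∑ j ∈ A, 1 / (j : ℝ) ≤ 14112 * (m / m.totient) / log M := by
  have block_le (k : ℕ) : ∑ j ∈ A with Nat.log 2 j = k, 1 / (j : ℝ) ≤
      7056 * (m / m.totient) / ((k : ℝ) + 1) ^ 2 := by
    have block_subset : {j ∈ A | Nat.log 2 j = k} ⊆
        {x ∈ Ico (2 ^ k) (2 ^ k + 2 ^ k) | x.Prime ∧ (m - x).Prime} := by
      intro j hj
      obtain ⟨hjA, hjk⟩ := mem_filter.1 hj
      obtain ⟨-, hjp, hmj⟩ := hA j hjA
      rw [Nat.log_eq_iff (.inr ⟨one_lt_two, hjp.ne_zero⟩), pow_succ, mul_two] at hjk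
      exact mem_filter.2 ⟨mem_Ico.2 hjk, hjp, hmj⟩
    calc ∑ j ∈ A with Nat.log 2 j = k, 1 / (j : ℝ)
        ≤ ∑ x ∈ Ico (2 ^ k) (2 ^ k + 2 ^ k) with x.Prime ∧ (m - x).Prime, 1 / (x : ℝ) :=
          sum_le_sum_of_subset_of_nonneg block_subset fun _ _ _ => by positivity
      _ ≤ 784 * (m / m.totient) / log (2 ^ k + 1) ^ 2 := by
          simpa using sum_goldbach_inv_Ico_le hm0 hm (N := 2 ^ k) (by positivity)
      _ ≤ 784 * (m / m.totient) / (((k : ℝ) + 1) / 3) ^ 2 := by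
          gcongr
          exact add_one_div_three_le_log_two_pow_add_one k
      _ = 7056 * (m / m.totient) / ((k : ℝ) + 1) ^ 2 := by
          field_simp
          norm_num
  calc ∑ j ∈ A, 1 / (j : ℝ) ≤ 2 * (7056 * (m / m.totient)) / log M :=
        sum_le_two_mul_div_log (by positivity) hM (fun j hj => (hA j hj).1) block_le
    _ = 14112 * (m / m.totient) / log M := by ring

end DyadicSummation

section SingularSeries

open Finset

theorem prod_one_add_inv_sub_one_eq {m : ℕ} (hm : m ≠ 0) :
    ∏ p ∈ m.primeFactors, (1 + 1 / ((p : ℝ) - 1)) = m / m.totient := by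
  have euler : (m.totient : ℝ) = m * ∏ p ∈ m.primeFactors, (1 - (p : ℝ)⁻¹) := by
    simpa using congrArg (Rat.cast : ℚ → ℝ) m.totient_eq_mul_prod_factors
  rw [euler, div_mul_cancel_left₀ (mod_cast hm), ← prod_inv_distrib]
  refine prod_congr rfl fun p hp => ?_
  have one_lt_p : (1 : ℝ) < p := mod_cast (Nat.prime_of_mem_primeFactors hp).one_lt
  have := sub_ne_zero.2 one_lt_p.ne'
  field_simp
  ring

theorem prod_range_one_sub_inv_add_two_sq (n : ℕ) :
    ∏ i ∈ range n, (1 - 1 / ((i : ℝ) + 2) ^ 2) = ((n : ℝ) + 2) / (2 * (n + 1)) := by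
  induction n with
  | zero => norm_num
  | succ n ih =>
    rw [prod_range_succ, ih]
    push_cast
    field_simp
    ring

theorem half_le_prod_one_sub_inv_sq {s : Finset ℕ} (hs : ∀ n ∈ s, 3 ≤ n) :
    1 / 2 ≤ ∏ n ∈ s, (1 - 1 / ((n : ℝ) - 1) ^ 2) := by
  have subset_image : s ⊆ (range (s.sup id)).image (· + 3) := by
    intro n hn
    have le_sup : n ≤ s.sup id := le_sup (f := id) hn
    have three_le := hs n hn
    exact mem_image.2 ⟨n - 3, mem_range.2 (by lia), Nat.sub_add_cancel three_le⟩
  have factor_mem (n : ℕ) (hn : n ∈ (range (s.sup id)).image (· + 3)) :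
      0 ≤ 1 - 1 / ((n : ℝ) - 1) ^ 2 ∧ 1 - 1 / ((n : ℝ) - 1) ^ 2 ≤ 1 := by
    obtain ⟨i, -, rfl⟩ := mem_image.1 hn
    have one_le_sq : 1 ≤ (((i + 3 : ℕ) : ℝ) - 1) ^ 2 := by
      push_cast
      nlinarith [(i.cast_nonneg : (0 : ℝ) ≤ i)]
    exact ⟨sub_nonneg.2 (div_le_one_of_le₀ one_le_sq (by positivity)),
      sub_le_self 1 (by positivity)⟩
  calc (1 / 2 : ℝ) ≤ ((s.sup id : ℕ) + 2) / (2 * ((s.sup id : ℕ) + 1)) := by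
        rw [div_le_div_iff₀ two_pos (by positivity)]
        linarith
    _ = ∏ i ∈ range (s.sup id), (1 - 1 / ((i : ℝ) + 2) ^ 2) :=
        (prod_range_one_sub_inv_add_two_sq _).symm
    _ = ∏ n ∈ image (fun i : ℕ => i + 3) (range (s.sup id)), (1 - 1 / ((n : ℝ) - 1) ^ 2) := by
        rw [prod_image fun i _ j _ hij => Nat.add_right_cancel hij]
        refine prod_congr rfl fun i _ => ?_
        push_cast
        ring
    _ ≤ ∏ n ∈ s, (1 - 1 / ((n : ℝ) - 1) ^ 2) :=
        prod_le_prod_of_subset_of_le_one subset_image (fun n hn => (factor_mem n hn).1)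
          fun n hn _ => (factor_mem n hn).2

theorem multipliable_one_sub_inv_sq (P : ℕ → Prop) :
    Multipliable fun n : {n : ℕ // P n} => (1 - 1 / ((n : ℕ) - 1 : ℝ) ^ 2) := by
  have summable : Summable fun n : ℕ => 1 / ((n : ℝ) - 1) ^ 2 := by
    refine (summable_nat_add_iff 1).1 ?_
    simp
  exact Real.multipliable_one_add_of_summable (summable.subtype {n | P n}).neg

theorem half_le_tprod_one_sub_inv_sq {P : ℕ → Prop} (hP : ∀ n, P n → 3 ≤ n) :
    1 / 2 ≤ ∏' n : {n : ℕ // P n}, (1 - 1 / ((n : ℕ) - 1 : ℝ) ^ 2) := by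
  refine ge_of_tendsto' (multipliable_one_sub_inv_sq P).hasProd fun s => ?_
  have half_le_prod_map : 1 / 2 ≤ ∏ n ∈ s.map (.subtype P), (1 - 1 / ((n : ℝ) - 1) ^ 2) :=
    half_le_prod_one_sub_inv_sq fun n hn => hP n (property_of_mem_map_subtype s hn)
  rwa [prod_map] at half_le_prod_map

theorem half_mul_div_totient_le_singularSeries {m : ℕ} (hm0 : m ≠ 0) (hm : 2 ∣ m) :
    1 / 2 * (m / m.totient : ℝ) ≤ singularSeries m := by
  rw [singularSeries, prod_one_add_inv_sub_one_eq hm0]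
  refine mul_le_mul_of_nonneg_right (half_le_tprod_one_sub_inv_sq fun p hp => ?_) (by positivity)
  exact hp.1.two_le.lt_of_ne fun h => hp.2 (h ▸ hm)

end SingularSeries

/-- There is an absolute `C > 0` such that for every even `m ≥ 4` and every real
`3 ≤ M ≤ m`, `∑_{M ≤ j ≤ m, j and m-j prime} 1/j ≤ C·C(m)/log M`. -/
theorem sum_reciprocal_goldbach_primes_le :
    ∃ C : ℝ, 0 < C ∧ ∀ m : ℕ, Even m → 4 ≤ m →
      ∀ M : ℝ, 3 ≤ M → M ≤ m →
        ∑ j ∈ (Finset.Icc 1 m).filter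
            (fun j : ℕ => M ≤ (j : ℝ) ∧ Nat.Prime j ∧ Nat.Prime (m - j)),
          (1 : ℝ) / (j : ℝ) ≤ C * singularSeries m / Real.log M := by
  refine ⟨28224, by norm_num, fun m hm hm4 M hM _ => ?_⟩
  have hm0 : m ≠ 0 := Nat.ne_zero_of_lt hm4
  have log_nonneg : 0 ≤ log M := log_nonneg (by linarith)
  calc _ ≤ 14112 * (m / m.totient) / log M :=
        sum_goldbach_inv_le hm0 hm.two_dvd (by linarith) fun j hj => (Finset.mem_filter.1 hj).2
    _ = 28224 * (1 / 2 * (m / m.totient : ℝ)) / log M := by ring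
    _ ≤ 28224 * singularSeries m / log M := by
        grw [half_mul_div_totient_le_singularSeries hm0 hm.two_dvd]
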